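/- For every n ≥ 1 and every k with 0 ≤ k ≤ n−1, there exists a surjection F from {1,…,n}^k × {B ⊆ {1,…,n} : |B| = k+1} onto Σ_n(k) such that for all (A,B) and (A′,B′) in the domain, F(A,B) = F(A′,B′) if and only if there exists r ∈ ℤ with A′ = (c^r(a₁),…,c^r(a_k)) and B′ = c^r(B) (the image of B under c^r), where A = (a₁,…,a_k). In particular, every fibre of F has exactly n elements. -/

import Mathlib

/-- ℓ(σ): the number of cycles (orbits) of σ, including fixed points, counted via the
minimal representative of each orbit. -/
noncomputable def cycleCount {n : ℕ} (σ : Equiv.Perm (Fin n)) : ℕ :=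
  Set.ncard {x : Fin n | ∀ y, σ.SameCycle x y → x ≤ y}

/-- |σ| := n − ℓ(σ). -/
noncomputable def normPerm {n : ℕ} (σ : Equiv.Perm (Fin n)) : ℕ := n - cycleCount σ

/-- σ₁ ≼ σ₂ iff |σ₂| = |σ₁| + |σ₁⁻¹σ₂|. -/
def precLe {n : ℕ} (σ₁ σ₂ : Equiv.Perm (Fin n)) : Prop :=
  normPerm σ₂ = normPerm σ₁ + normPerm (σ₁⁻¹ * σ₂)

/-- Σ_n(k): tuples of k transpositions with |τ₁⋯τ_k| = k and τ₁⋯τ_k ≼ (1 … n). -/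
def SigmaSet (n k : ℕ) : Set (Fin k → Equiv.Perm (Fin n)) :=
  {τ | (∀ l, (τ l).IsSwap) ∧ normPerm (List.ofFn τ).prod = k ∧
      precLe (List.ofFn τ).prod (finRotate n)}

/-- γ_m := τ₁∘⋯∘τ_m, the product of the first m entries of the chain. -/
def gammaP {n k : ℕ} (τ : Fin k → Equiv.Perm (Fin n)) (m : ℕ) : Equiv.Perm (Fin n) :=
  ((List.ofFn τ).take m).prod

/-!
Let `c` be an `n`-cycle. The shift acts freely on the domain, which has `n ^ k * C(n, k + 1)`
elements, so `F` exists as soon as `n * |Σ_n(k)| = n ^ k * C(n, k + 1)`: match the orbits with the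
elements of `Σ_n(k)` by any bijection.

For this count, let `c` range over all `n`-cycles. Pairs of an `n`-cycle `c` and a tuple cutting
`c` into `σ = (τ₁ ⋯ τ_k)⁻¹ c` with `k + 1` cycles are the same as pairs of such a `σ` and a tuple
joining its cycles into one. Joining two cycles through points `x` and `y` replaces their lengths
`a` and `b` by `a + b`, and there are `a * b` choices of `x` and `y`; by induction the number of
joining tuples of `σ` is `k! * n ^ (k - 1)` times the product of its cycle lengths. The sum of
these products is the number `L(k + 1)` of permutations with `k + 1` cycles and a mark on each
cycle, and joining two cycles at their marks gives `p * (p + 1) * L(p + 1) = (n - p) * L(p)`. As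
`|Σ_n(k)|` is the same for all `c` by conjugation, dividing by the number of `n`-cycles gives the
claim.
-/

open Equiv Equiv.Perm Finset

section SameCycle

variable {α : Type*} [Finite α] {σ : Perm α} {x y u v : α}

theorem mem_of_sameCycle_of_mapsTo {s : Set α} (hs : Set.MapsTo σ s s) (huv : σ.SameCycle u v)
    (hu : u ∈ s) : v ∈ s := by
  obtain ⟨i, -, rfl⟩ := huv.exists_pow_eq'
  exact hs.perm_pow i hu

variable [DecidableEq α]

theorem sameCycle_of_sameCycle_swap_mul (hxy : σ.SameCycle x y)
    (huv : (swap x y * σ).SameCycle u v) : σ.SameCycle u v := by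
  refine mem_of_sameCycle_of_mapsTo (s := {z | σ.SameCycle u z}) (fun z hz => ?_) huv (.refl σ u)
  have huz : σ.SameCycle u (σ z) := sameCycle_apply_right.2 hz
  change σ.SameCycle u (swap x y (σ z))
  rw [swap_apply_def]
  split_ifs with hx hy
  · exact (hx ▸ huz).trans hxy
  · exact (hy ▸ huz).trans hxy.symm
  · exact huz

theorem sameCycle_swap_mul_of_not_sameCycle (hxy : ¬σ.SameCycle x y) :
    (swap x y * σ).SameCycle x y := by
  by_contra hxy'
  have hmaps : Set.MapsTo σ {z | σ.SameCycle x z ∧ (swap x y * σ).SameCycle x z}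
      {z | σ.SameCycle x z ∧ (swap x y * σ).SameCycle x z} := by
    rintro z ⟨hz, hz'⟩
    have hσ : σ.SameCycle x (σ z) := sameCycle_apply_right.2 hz
    have hσ' : (swap x y * σ).SameCycle x (swap x y (σ z)) := sameCycle_apply_right.2 hz'
    have hzx : σ z ≠ x := fun h => hxy' (by rwa [h, swap_apply_left] at hσ')
    have hzy : σ z ≠ y := fun h => hxy (h ▸ hσ)
    exact ⟨hσ, by rwa [swap_apply_of_ne_of_ne hzx hzy] at hσ'⟩
  have hpred := (mem_of_sameCycle_of_mapsTo hmaps (v := σ⁻¹ x) ⟨-1, by simp⟩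
    ⟨.refl _ x, .refl _ x⟩).2
  exact hxy' (by simpa using sameCycle_apply_right.2 hpred)

theorem not_sameCycle_swap_mul_of_sameCycle (hne : x ≠ y) (hxy : σ.SameCycle x y) :
    ¬(swap x y * σ).SameCycle x y := by
  have hex : ∃ i, (σ ^ i) x = y := hxy.exists_nat_pow_eq
  obtain ⟨i, hiy, hmin⟩ : ∃ i, (σ ^ i) x = y ∧ ∀ j < i, (σ ^ j) x ≠ y :=
    ⟨Nat.find hex, Nat.find_spec hex, fun j => Nat.find_min hex⟩
  have hi : 0 < i := Nat.pos_of_ne_zero (by rintro rfl; exact hne hiy)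
  have hreturn : ∀ j, 0 < j → j < i → (σ ^ j) x ≠ x := by
    intro j hj hji hjx
    refine hmin (i - j) (by omega) ?_
    rw [← hiy, ← Nat.sub_add_cancel hji.le, pow_add, mul_apply, hjx, Nat.add_sub_cancel]
  -- `swap x y * σ` closes the arc of the cycle from `x` to the predecessor of `y` up into a cycle.
  have hmaps : Set.MapsTo (swap x y * σ) {z | ∃ j < i, (σ ^ j) x = z}
      {z | ∃ j < i, (σ ^ j) x = z} := by
    rintro _ ⟨j, hj, rfl⟩
    rw [mul_apply, ← mul_apply σ, ← pow_succ']
    rcases (Nat.succ_le_of_lt hj).lt_or_eq with hlt | heq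
    · exact ⟨j + 1, hlt, (swap_apply_of_ne_of_ne (hreturn _ j.succ_pos hlt) (hmin _ hlt)).symm⟩
    · exact ⟨0, hi, by rw [← heq] at hiy; simp [hiy]⟩
  intro hxy'
  obtain ⟨j, hj, hjy⟩ := mem_of_sameCycle_of_mapsTo hmaps hxy' ⟨0, hi, rfl⟩
  exact hmin j hj hjy

theorem sameCycle_swap_mul_of_sameCycle (hxy : ¬σ.SameCycle x y) (huv : σ.SameCycle u v) :
    (swap x y * σ).SameCycle u v :=
  sameCycle_of_sameCycle_swap_mul (sameCycle_swap_mul_of_not_sameCycle hxy)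
    (by rwa [swap_mul_self_mul])

theorem sameCycle_swap_mul_iff_of_not_sameCycle (hxy : ¬σ.SameCycle x y) :
    (swap x y * σ).SameCycle u v ↔ σ.SameCycle u v ∨
      (σ.SameCycle x u ∨ σ.SameCycle y u) ∧ (σ.SameCycle x v ∨ σ.SameCycle y v) := by
  have hmerge : ∀ {z}, σ.SameCycle x z ∨ σ.SameCycle y z → (swap x y * σ).SameCycle x z :=
    fun hz => hz.elim (sameCycle_swap_mul_of_sameCycle hxy) fun hz =>
      (sameCycle_swap_mul_of_not_sameCycle hxy).trans (sameCycle_swap_mul_of_sameCycle hxy hz)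
  constructor
  · intro huv
    by_cases hu : σ.SameCycle x u ∨ σ.SameCycle y u
    · refine .inr ⟨hu, mem_of_sameCycle_of_mapsTo
        (s := {z | σ.SameCycle x z ∨ σ.SameCycle y z}) (fun z hz => ?_) huv hu⟩
      change σ.SameCycle x (swap x y (σ z)) ∨ σ.SameCycle y (swap x y (σ z))
      rw [swap_apply_def]
      split_ifs
      · exact .inr (.refl σ y)
      · exact .inl (.refl σ x)
      · exact hz.imp sameCycle_apply_right.2 sameCycle_apply_right.2
    · refine .inl (mem_of_sameCycle_of_mapsTo
        (s := {z | σ.SameCycle u z}) (fun z hz => ?_) huv (.refl σ u))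
      have huz : σ.SameCycle u (σ z) := sameCycle_apply_right.2 hz
      rw [not_or] at hu
      have hx : σ z ≠ x := fun h => hu.1 (h ▸ huz.symm)
      have hy : σ z ≠ y := fun h => hu.2 (h ▸ huz.symm)
      change σ.SameCycle u (swap x y (σ z))
      rwa [swap_apply_of_ne_of_ne hx hy]
  · rintro (huv | ⟨hu, hv⟩)
    · exact sameCycle_swap_mul_of_sameCycle hxy huv
    · exact (hmerge hu).symm.trans (hmerge hv)

end SameCycle

section CyclePartition

variable {α : Type*} [Fintype α] [DecidableEq α]

instance (σ : Perm α) : DecidableRel (SameCycle.setoid σ) :=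
  inferInstanceAs (DecidableRel σ.SameCycle)

/-- The partition of `α` into the cycles of `σ`, fixed points included. -/
def cyclePartition (σ : Perm α) : Finpartition (univ : Finset α) :=
  .ofSetoid (SameCycle.setoid σ)

/-- The number `ℓ(σ)` of cycles of `σ`, fixed points included. -/
def numCycles (σ : Perm α) : ℕ := #(cyclePartition σ).parts

/-- The length of the cycle of `σ` through `x`. -/
def cycleLength (σ : Perm α) (x : α) : ℕ := #((cyclePartition σ).part x)

/-- The product of the lengths of the cycles of `σ`, that is, the number of ways to choose one
point on each cycle. -/
def cycleLengthProd (σ : Perm α) : ℕ := ∏ C ∈ (cyclePartition σ).parts, #C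

variable {σ : Perm α} {x y u : α}

theorem mem_part_cyclePartition : y ∈ (cyclePartition σ).part x ↔ σ.SameCycle x y :=
  Finpartition.mem_part_ofSetoid_iff_rel

theorem part_cyclePartition_eq_iff :
    (cyclePartition σ).part x = (cyclePartition σ).part y ↔ σ.SameCycle x y := by
  rw [← Finpartition.mem_part_iff_part_eq_part _ (mem_univ x) (mem_univ y),
    mem_part_cyclePartition, sameCycle_comm]

theorem mem_parts_cyclePartition {C : Finset α} :
    C ∈ (cyclePartition σ).parts ↔ ∃ x, (cyclePartition σ).part x = C :=
  ⟨fun hC => let ⟨x, _, hx⟩ := (cyclePartition σ).part_surjOn hC; ⟨x, hx⟩,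
    fun ⟨x, hx⟩ => hx ▸ (cyclePartition σ).part_mem.2 (mem_univ x)⟩

theorem cycleLength_pos (σ : Perm α) (x : α) : 0 < cycleLength σ x :=
  card_pos.2 ((cyclePartition σ).part_nonempty.2 (mem_univ x))

theorem cycleLength_eq_of_sameCycle (h : σ.SameCycle x y) : cycleLength σ x = cycleLength σ y :=
  congrArg card (part_cyclePartition_eq_iff.2 h)

theorem card_filter_sameCycle (σ : Perm α) (x : α) :
    #{y | σ.SameCycle x y} = cycleLength σ x := by
  congr 1
  ext y
  simp [mem_part_cyclePartition]

theorem sum_inv_cycleLength (σ : Perm α) : ∑ x, (cycleLength σ x : ℚ)⁻¹ = numCycles σ := by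
  have hcycle : ∀ C ∈ (cyclePartition σ).parts, ∑ x ∈ C, (cycleLength σ x : ℚ)⁻¹ = 1 := by
    intro C hC
    have hlength : ∀ x ∈ C, (cycleLength σ x : ℚ)⁻¹ = (#C : ℚ)⁻¹ := fun x hx => by
      rw [cycleLength, (cyclePartition σ).part_eq_of_mem hC hx]
    have hcard : (#C : ℚ) ≠ 0 :=
      Nat.cast_ne_zero.2 (card_pos.2 ((cyclePartition σ).nonempty_of_mem_parts hC)).ne'
    rw [sum_congr rfl hlength, sum_const, nsmul_eq_mul, mul_inv_cancel₀ hcard]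
  calc ∑ x, (cycleLength σ x : ℚ)⁻¹
      = ∑ x ∈ (cyclePartition σ).parts.biUnion id, (cycleLength σ x : ℚ)⁻¹ := by
        rw [(cyclePartition σ).biUnion_parts]
    _ = ∑ C ∈ (cyclePartition σ).parts, ∑ x ∈ C, (cycleLength σ x : ℚ)⁻¹ :=
        sum_biUnion (cyclePartition σ).disjoint
    _ = numCycles σ := by rw [sum_congr rfl hcycle, sum_const, nsmul_one, numCycles]

theorem numCycles_one : numCycles (1 : Perm α) = Fintype.card α := by
  have h := sum_inv_cycleLength (1 : Perm α)
  simp only [← card_filter_sameCycle, sameCycle_one, filter_eq, mem_univ, if_true,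
    card_singleton, Nat.cast_one, inv_one, sum_const, nsmul_one, card_univ] at h
  exact_mod_cast h.symm

theorem numCycles_le_card (σ : Perm α) : numCycles σ ≤ Fintype.card α :=
  (cyclePartition σ).card_parts_le_card

theorem numCycles_pos [Nonempty α] (σ : Perm α) : 0 < numCycles σ :=
  card_pos.2 ⟨_, (cyclePartition σ).part_mem.2 (mem_univ (Classical.arbitrary α))⟩

theorem numCycles_conj (g σ : Perm α) : numCycles (g * σ * g⁻¹) = numCycles σ := by
  have hlength : ∀ x, cycleLength (g * σ * g⁻¹) (g x) = cycleLength σ x := fun x => by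
    simp only [← card_filter_sameCycle]
    exact card_equiv g⁻¹ fun y => by simp
  have h := sum_inv_cycleLength (g * σ * g⁻¹)
  rw [← Equiv.sum_comp g] at h
  simp only [hlength, sum_inv_cycleLength] at h
  exact_mod_cast h.symm

end CyclePartition

section Merge

variable {α : Type*} [Fintype α] [DecidableEq α] {σ : Perm α} {x y : α}

theorem part_cyclePartition_swap_mul (hxy : ¬σ.SameCycle x y) (u : α) :
    (cyclePartition (swap x y * σ)).part u =
      if σ.SameCycle x u ∨ σ.SameCycle y u then
        (cyclePartition σ).part x ∪ (cyclePartition σ).part y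
      else (cyclePartition σ).part u := by
  ext v
  rw [mem_part_cyclePartition, sameCycle_swap_mul_iff_of_not_sameCycle hxy]
  split_ifs with hu
  · simp only [mem_union, mem_part_cyclePartition, hu, true_and, or_iff_right_iff_imp]
    exact fun huv => hu.imp (·.trans huv) (·.trans huv)
  · simp only [mem_part_cyclePartition, hu, false_and, or_false]

theorem parts_cyclePartition_swap_mul (hxy : ¬σ.SameCycle x y) :
    (cyclePartition (swap x y * σ)).parts =
      insert ((cyclePartition σ).part x ∪ (cyclePartition σ).part y)
        (((cyclePartition σ).parts.erase ((cyclePartition σ).part x)).erase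
          ((cyclePartition σ).part y)) := by
  ext C
  simp only [mem_insert, mem_erase, mem_parts_cyclePartition, part_cyclePartition_swap_mul hxy]
  constructor
  · rintro ⟨u, rfl⟩
    split_ifs with hu
    · exact .inl rfl
    · rw [not_or, ← part_cyclePartition_eq_iff, ← part_cyclePartition_eq_iff] at hu
      exact .inr ⟨Ne.symm hu.2, Ne.symm hu.1, u, rfl⟩
  · rintro (rfl | ⟨hy, hx, u, rfl⟩)
    · exact ⟨x, if_pos (.inl (.refl σ x))⟩
    · refine ⟨u, if_neg ?_⟩
      rw [not_or, ← part_cyclePartition_eq_iff, ← part_cyclePartition_eq_iff]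
      exact ⟨Ne.symm hx, Ne.symm hy⟩

theorem disjoint_part_cyclePartition (hxy : ¬σ.SameCycle x y) :
    Disjoint ((cyclePartition σ).part x) ((cyclePartition σ).part y) :=
  disjoint_left.2 fun _ hx hy =>
    hxy ((mem_part_cyclePartition.1 hx).trans (mem_part_cyclePartition.1 hy).symm)

theorem part_union_part_notMem_erase_erase (hxy : ¬σ.SameCycle x y) :
    (cyclePartition σ).part x ∪ (cyclePartition σ).part y ∉
      ((cyclePartition σ).parts.erase ((cyclePartition σ).part x)).erase
        ((cyclePartition σ).part y) := by
  intro h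
  obtain ⟨u, hu⟩ := mem_parts_cyclePartition.1 (mem_of_mem_erase (mem_of_mem_erase h))
  have hmem : ∀ v ∈ (cyclePartition σ).part x ∪ (cyclePartition σ).part y, σ.SameCycle u v :=
    fun v hv => mem_part_cyclePartition.1 (hu ▸ hv)
  exact hxy ((hmem x (by simp [mem_part_cyclePartition])).symm.trans
    (hmem y (by simp [mem_part_cyclePartition])))

theorem part_mem_parts_erase_part (hxy : ¬σ.SameCycle x y) :
    (cyclePartition σ).part y ∈ (cyclePartition σ).parts.erase ((cyclePartition σ).part x) :=
  mem_erase.2 ⟨fun h => hxy (part_cyclePartition_eq_iff.1 h.symm),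
    mem_parts_cyclePartition.2 ⟨y, rfl⟩⟩

theorem numCycles_swap_mul_add_one (hxy : ¬σ.SameCycle x y) :
    numCycles (swap x y * σ) + 1 = numCycles σ := by
  rw [numCycles, parts_cyclePartition_swap_mul hxy,
    card_insert_of_notMem (part_union_part_notMem_erase_erase hxy),
    card_erase_add_one (part_mem_parts_erase_part hxy),
    card_erase_add_one (mem_parts_cyclePartition.2 ⟨x, rfl⟩), numCycles]

theorem cycleLength_swap_mul (hxy : ¬σ.SameCycle x y) :
    cycleLength (swap x y * σ) x = cycleLength σ x + cycleLength σ y := by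
  rw [cycleLength, part_cyclePartition_swap_mul hxy, if_pos (.inl (.refl σ x)),
    card_union_of_disjoint (disjoint_part_cyclePartition hxy), cycleLength, cycleLength]

theorem cycleLengthProd_swap_mul (hxy : ¬σ.SameCycle x y) :
    cycleLengthProd (swap x y * σ) * (cycleLength σ x * cycleLength σ y) =
      cycleLengthProd σ * (cycleLength σ x + cycleLength σ y) := by
  rw [cycleLengthProd, parts_cyclePartition_swap_mul hxy,
    prod_insert (part_union_part_notMem_erase_erase hxy),
    card_union_of_disjoint (disjoint_part_cyclePartition hxy), cycleLengthProd,
    ← mul_prod_erase _ _ (mem_parts_cyclePartition.2 ⟨x, rfl⟩),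
    ← mul_prod_erase _ _ (part_mem_parts_erase_part hxy)]
  simp only [cycleLength]
  ring

theorem numCycles_swap_mul_of_sameCycle (hne : x ≠ y) (hxy : σ.SameCycle x y) :
    numCycles (swap x y * σ) = numCycles σ + 1 := by
  have h := numCycles_swap_mul_add_one (not_sameCycle_swap_mul_of_sameCycle hne hxy)
  rwa [swap_mul_self_mul, eq_comm] at h

end Merge

section Swap

variable {α : Type*} [Fintype α] [DecidableEq α] {σ τ : Perm α}

theorem numCycles_le_numCycles_isSwap_mul_add_one (hτ : τ.IsSwap) (σ : Perm α) :
    numCycles σ ≤ numCycles (τ * σ) + 1 := by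
  obtain ⟨x, y, hne, rfl⟩ := hτ
  by_cases hxy : σ.SameCycle x y
  · rw [numCycles_swap_mul_of_sameCycle hne hxy]
    omega
  · exact (numCycles_swap_mul_add_one hxy).ge

theorem numCycles_le_numCycles_prod_mul_add_length {l : List (Perm α)}
    (hl : ∀ τ ∈ l, τ.IsSwap) (σ : Perm α) :
    numCycles σ ≤ numCycles (l.prod * σ) + l.length := by
  induction l with
  | nil => simp
  | cons τ l ih =>
    rw [List.forall_mem_cons] at hl
    have hτ := numCycles_le_numCycles_isSwap_mul_add_one hl.1 (l.prod * σ)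
    have hl := ih hl.2
    rw [List.prod_cons, mul_assoc, List.length_cons]
    omega

theorem numCycles_add_numCycles_le (σ π : Perm α) :
    numCycles σ + numCycles π ≤ numCycles (π * σ) + Fintype.card α := by
  by_cases hπ : ∀ x, π x = x
  · obtain rfl : π = 1 := Equiv.ext hπ
    rw [one_mul, numCycles_one]
  · push Not at hπ
    obtain ⟨x, hx⟩ := hπ
    -- Cutting `x` off its cycle of `π` produces a permutation with one more cycle.
    have hcut : numCycles (swap x (π x) * π) = numCycles π + 1 :=
      numCycles_swap_mul_of_sameCycle hx.symm (sameCycle_apply_right.2 (.refl π x))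
    have ih := numCycles_add_numCycles_le σ (swap x (π x) * π)
    have hswap := numCycles_le_numCycles_isSwap_mul_add_one ⟨x, π x, hx.symm, rfl⟩
      (swap x (π x) * π * σ)
    rw [← mul_assoc, swap_mul_self_mul] at hswap
    omega
termination_by Fintype.card α - numCycles π
decreasing_by
  have hle := numCycles_le_card (swap x (π x) * π)
  omega

instance : DecidablePred (IsSwap : Perm α → Prop) :=
  fun τ => inferInstanceAs (Decidable (∃ x y, x ≠ y ∧ τ = swap x y))

theorem filter_offDiag_swap_eq {x y : α} (hne : x ≠ y) :
    {p ∈ (univ : Finset α).offDiag | swap p.1 p.2 = swap x y} = {(x, y), (y, x)} := by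
  ext ⟨u, v⟩
  simp only [mem_filter, mem_offDiag, mem_univ, true_and, mem_insert, mem_singleton,
    Prod.mk.injEq]
  constructor
  · rintro ⟨huv, h⟩
    have hu := Equiv.congr_fun h u
    have hv := Equiv.congr_fun h v
    simp only [swap_apply_def] at hu hv
    grind
  · rintro (⟨rfl, rfl⟩ | ⟨rfl, rfl⟩)
    · exact ⟨hne, rfl⟩
    · exact ⟨hne.symm, swap_comm _ _⟩

theorem two_mul_sum_isSwap {R : Type*} [NonAssocSemiring R] (g : Perm α → R) :
    2 * ∑ τ with IsSwap τ, g τ = ∑ p ∈ (univ : Finset α).offDiag, g (swap p.1 p.2) := by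
  have hmaps : ∀ p ∈ (univ : Finset α).offDiag, swap p.1 p.2 ∈ ({τ | IsSwap τ} : Finset (Perm α)) :=
    fun p hp => by simpa using ⟨p.1, p.2, (mem_offDiag.1 hp).2.2, rfl⟩
  rw [← sum_fiberwise_of_maps_to hmaps, mul_sum]
  refine sum_congr rfl fun τ hτ => ?_
  obtain ⟨x, y, hne, rfl⟩ := (mem_filter.1 hτ).2
  rw [sum_congr rfl fun p hp => congrArg g (mem_filter.1 hp).2, sum_const,
    filter_offDiag_swap_eq hne, card_pair (by simp [hne]), nsmul_eq_mul, Nat.cast_ofNat]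

end Swap

section PairSums

variable {α : Type*} [Fintype α] [DecidableEq α] {σ : Perm α} {x y : α}

theorem sum_sameCycle_inv_cycleLength_mul (σ : Perm α) (f : α → ℚ) :
    ∑ p : α × α with σ.SameCycle p.1 p.2, (cycleLength σ p.1 : ℚ)⁻¹ * f p.1 = ∑ x, f x := by
  rw [sum_filter, Fintype.sum_prod_type]
  refine sum_congr rfl fun x _ => ?_
  have hx : (cycleLength σ x : ℚ) ≠ 0 := Nat.cast_ne_zero.2 (cycleLength_pos σ x).ne'
  simp only [← sum_filter, sum_const, card_filter_sameCycle, nsmul_eq_mul, mul_inv_cancel_left₀ hx]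

theorem sum_not_sameCycle_inv_cycleLength (σ : Perm α) :
    ∑ p : α × α with ¬σ.SameCycle p.1 p.2, (cycleLength σ p.1 : ℚ)⁻¹ =
      Fintype.card α * (numCycles σ - 1) := by
  have hsame : ∑ p : α × α with σ.SameCycle p.1 p.2, (cycleLength σ p.1 : ℚ)⁻¹ =
      Fintype.card α := by
    simpa using sum_sameCycle_inv_cycleLength_mul σ 1
  have hall : ∑ p : α × α, (cycleLength σ p.1 : ℚ)⁻¹ = Fintype.card α * numCycles σ := by
    simp only [Fintype.sum_prod_type, sum_const, card_univ, nsmul_eq_mul, ← mul_sum,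
      sum_inv_cycleLength]
  linarith [sum_filter_add_sum_filter_not univ (fun p : α × α => σ.SameCycle p.1 p.2)
    fun p => (cycleLength σ p.1 : ℚ)⁻¹]

theorem sum_not_sameCycle_inv_cycleLength_mul_inv_cycleLength (σ : Perm α) :
    ∑ p : α × α with ¬σ.SameCycle p.1 p.2,
        (cycleLength σ p.1 : ℚ)⁻¹ * (cycleLength σ p.2 : ℚ)⁻¹ =
      numCycles σ * (numCycles σ - 1) := by
  have hsame : ∑ p : α × α with σ.SameCycle p.1 p.2,
      (cycleLength σ p.1 : ℚ)⁻¹ * (cycleLength σ p.2 : ℚ)⁻¹ = numCycles σ := by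
    rw [← sum_inv_cycleLength, ← sum_sameCycle_inv_cycleLength_mul]
    refine sum_congr rfl fun p hp => ?_
    rw [cycleLength_eq_of_sameCycle (mem_filter.1 hp).2]
  have hall : ∑ p : α × α, (cycleLength σ p.1 : ℚ)⁻¹ * (cycleLength σ p.2 : ℚ)⁻¹ =
      numCycles σ * numCycles σ := by
    simp only [Fintype.sum_prod_type, ← mul_sum, ← sum_mul, sum_inv_cycleLength]
  linarith [sum_filter_add_sum_filter_not univ (fun p : α × α => σ.SameCycle p.1 p.2)
    fun p => (cycleLength σ p.1 : ℚ)⁻¹ * (cycleLength σ p.2 : ℚ)⁻¹]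

theorem sum_sameCycle_ne_inv_cycleLength (σ : Perm α) :
    ∑ p : α × α with σ.SameCycle p.1 p.2 ∧ p.1 ≠ p.2, (cycleLength σ p.1 : ℚ)⁻¹ =
      Fintype.card α - numCycles σ := by
  have hsame : ∑ p : α × α with σ.SameCycle p.1 p.2, (cycleLength σ p.1 : ℚ)⁻¹ =
      Fintype.card α := by
    simpa using sum_sameCycle_inv_cycleLength_mul σ 1
  have hdiag : ∑ p : α × α with σ.SameCycle p.1 p.2 ∧ p.1 = p.2, (cycleLength σ p.1 : ℚ)⁻¹ =
      numCycles σ := by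
    rw [← sum_inv_cycleLength]
    exact sum_nbij' Prod.fst (fun x => (x, x)) (by simp) (by simp [SameCycle.refl])
      (by simp +contextual [Prod.ext_iff]) (by simp) (by simp)
  have hsplit := sum_filter_add_sum_filter_not {p : α × α | σ.SameCycle p.1 p.2}
    (fun p => p.1 = p.2) fun p => (cycleLength σ p.1 : ℚ)⁻¹
  rw [filter_filter, filter_filter] at hsplit
  linarith

theorem cast_cycleLengthProd_swap_mul (hxy : ¬σ.SameCycle x y) :
    (cycleLengthProd (swap x y * σ) : ℚ) =
      cycleLengthProd σ * ((cycleLength σ x : ℚ)⁻¹ + (cycleLength σ y : ℚ)⁻¹) := by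
  have hx : (cycleLength σ x : ℚ) ≠ 0 := Nat.cast_ne_zero.2 (cycleLength_pos σ x).ne'
  have hy : (cycleLength σ y : ℚ) ≠ 0 := Nat.cast_ne_zero.2 (cycleLength_pos σ y).ne'
  have h := congrArg (Nat.cast : ℕ → ℚ) (cycleLengthProd_swap_mul hxy)
  push_cast at h
  field_simp
  linarith

theorem cycleLengthProd_mul_inv_mul_inv (hxy : ¬σ.SameCycle x y) :
    (cycleLengthProd σ * ((cycleLength σ x : ℚ)⁻¹ * (cycleLength σ y : ℚ)⁻¹) : ℚ) =
      cycleLengthProd (swap x y * σ) * (cycleLength (swap x y * σ) x : ℚ)⁻¹ := by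
  have hx : (cycleLength σ x : ℚ) ≠ 0 := Nat.cast_ne_zero.2 (cycleLength_pos σ x).ne'
  have hy : (cycleLength σ y : ℚ) ≠ 0 := Nat.cast_ne_zero.2 (cycleLength_pos σ y).ne'
  rw [cast_cycleLengthProd_swap_mul hxy, cycleLength_swap_mul hxy]
  push_cast
  field_simp
  ring

theorem sum_isSwap_cycleLengthProd_mul (σ : Perm α) :
    ∑ τ with IsSwap τ, (if numCycles (τ * σ) + 1 = numCycles σ then
        (cycleLengthProd (τ * σ) : ℚ) else 0) =
      Fintype.card α * (numCycles σ - 1) * cycleLengthProd σ := by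
  have hjoin : ∑ p ∈ (univ : Finset α).offDiag,
      (if numCycles (swap p.1 p.2 * σ) + 1 = numCycles σ then
        (cycleLengthProd (swap p.1 p.2 * σ) : ℚ) else 0) =
      ∑ p : α × α with ¬σ.SameCycle p.1 p.2, (cycleLengthProd σ : ℚ) *
        ((cycleLength σ p.1 : ℚ)⁻¹ + (cycleLength σ p.2 : ℚ)⁻¹) := by
    rw [← sum_filter]
    refine sum_congr ?_ fun p hp => cast_cycleLengthProd_swap_mul (mem_filter.1 hp).2
    ext p
    simp only [mem_filter, mem_offDiag, mem_univ, true_and]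
    refine ⟨fun ⟨hne, h⟩ hsame => ?_,
      fun h => ⟨fun hp => h (hp ▸ .refl σ _), numCycles_swap_mul_add_one h⟩⟩
    rw [numCycles_swap_mul_of_sameCycle hne hsame] at h
    omega
  have hsymm : ∑ p : α × α with ¬σ.SameCycle p.1 p.2, (cycleLength σ p.2 : ℚ)⁻¹ =
      ∑ p : α × α with ¬σ.SameCycle p.1 p.2, (cycleLength σ p.1 : ℚ)⁻¹ :=
    sum_nbij' Prod.swap Prod.swap (by simp [sameCycle_comm]) (by simp [sameCycle_comm])
      (by simp) (by simp) (by simp)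
  have htwo := two_mul_sum_isSwap fun τ =>
    if numCycles (τ * σ) + 1 = numCycles σ then (cycleLengthProd (τ * σ) : ℚ) else 0
  rw [hjoin, ← mul_sum, sum_add_distrib, hsymm, sum_not_sameCycle_inv_cycleLength] at htwo
  linarith

end PairSums

section CycleLengthProdSum

variable (α : Type*) [Fintype α] [DecidableEq α]

/-- The number of permutations of `α` with `p` cycles and a marked point on each cycle. -/
def markedPermCount (p : ℕ) : ℕ := ∑ σ : Perm α with numCycles σ = p, cycleLengthProd σ

theorem sum_sum_not_sameCycle_swap_mul {M : Type*} [AddCommMonoid M] (p : ℕ)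
    (f : Perm α → α × α → M) :
    ∑ σ : Perm α with numCycles σ = p + 1, ∑ q : α × α with ¬σ.SameCycle q.1 q.2,
        f (swap q.1 q.2 * σ) q =
      ∑ ρ : Perm α with numCycles ρ = p, ∑ q : α × α with ρ.SameCycle q.1 q.2 ∧ q.1 ≠ q.2,
        f ρ q := by
  simp only [sum_sigma']
  refine sum_nbij' (fun s => ⟨swap s.2.1 s.2.2 * s.1, s.2⟩)
    (fun s => ⟨swap s.2.1 s.2.2 * s.1, s.2⟩) ?_ ?_ (by simp) (by simp) (by simp)
  · rintro ⟨σ, x, y⟩ h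
    simp only [mem_sigma, mem_filter, mem_univ, true_and] at h ⊢
    have hnum := numCycles_swap_mul_add_one h.2
    exact ⟨by omega, sameCycle_swap_mul_of_not_sameCycle h.2, fun hxy => h.2 (hxy ▸ .refl σ x)⟩
  · rintro ⟨ρ, x, y⟩ h
    simp only [mem_sigma, mem_filter, mem_univ, true_and] at h ⊢
    exact ⟨by rw [numCycles_swap_mul_of_sameCycle h.2.2 h.2.1, h.1],
      not_sameCycle_swap_mul_of_sameCycle h.2.2 h.2.1⟩

-- Marked points `x`, `y` on distinct cycles of `σ` correspond to a marked point `x` and a further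
-- point `y ≠ x` on one cycle of `swap x y * σ`.
theorem markedPermCount_succ (p : ℕ) :
    (p * (p + 1) * markedPermCount α (p + 1) : ℚ) =
      (Fintype.card α - p) * markedPermCount α p := by
  calc (p * (p + 1) * markedPermCount α (p + 1) : ℚ)
      = ∑ σ : Perm α with numCycles σ = p + 1, ∑ q : α × α with ¬σ.SameCycle q.1 q.2,
          (cycleLengthProd σ : ℚ) *
            ((cycleLength σ q.1 : ℚ)⁻¹ * (cycleLength σ q.2 : ℚ)⁻¹) := by
        rw [markedPermCount, Nat.cast_sum, mul_sum]
        refine sum_congr rfl fun σ hσ => ?_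
        rw [← mul_sum, sum_not_sameCycle_inv_cycleLength_mul_inv_cycleLength, (mem_filter.1 hσ).2]
        push_cast
        ring
    _ = ∑ σ : Perm α with numCycles σ = p + 1, ∑ q : α × α with ¬σ.SameCycle q.1 q.2,
          (cycleLengthProd (swap q.1 q.2 * σ) : ℚ) *
            (cycleLength (swap q.1 q.2 * σ) q.1 : ℚ)⁻¹ :=
        sum_congr rfl fun σ _ => sum_congr rfl fun q hq =>
          cycleLengthProd_mul_inv_mul_inv (mem_filter.1 hq).2
    _ = ∑ ρ : Perm α with numCycles ρ = p, ∑ q : α × α with ρ.SameCycle q.1 q.2 ∧ q.1 ≠ q.2,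
          (cycleLengthProd ρ : ℚ) * (cycleLength ρ q.1 : ℚ)⁻¹ :=
        sum_sum_not_sameCycle_swap_mul α p fun ρ q => cycleLengthProd ρ * (cycleLength ρ q.1 : ℚ)⁻¹
    _ = (Fintype.card α - p) * markedPermCount α p := by
        rw [markedPermCount, Nat.cast_sum, mul_sum]
        refine sum_congr rfl fun ρ hρ => ?_
        rw [← mul_sum, sum_sameCycle_ne_inv_cycleLength, (mem_filter.1 hρ).2, mul_comm]

theorem cast_choose_succ_mul (n k : ℕ) :
    (n.choose (k + 1) * (k + 1) : ℚ) = n.choose k * (n - k) := by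
  rcases le_or_gt k n with hk | hk
  · rw [← Nat.cast_sub hk]
    exact_mod_cast Nat.choose_succ_right_eq n k
  · rw [Nat.choose_eq_zero_of_lt hk, Nat.choose_eq_zero_of_lt (hk.trans k.lt_succ_self)]
    simp

theorem card_mul_factorial_mul_markedPermCount (k : ℕ) :
    (Fintype.card α * k.factorial * markedPermCount α (k + 1) : ℚ) =
      (Fintype.card α).choose (k + 1) * markedPermCount α 1 := by
  induction k with
  | zero => simp
  | succ k ih =>
    have hrec := markedPermCount_succ α (k + 1)
    have hchoose := cast_choose_succ_mul (Fintype.card α) (k + 1)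
    have hk : (k + 2 : ℚ) ≠ 0 := by positivity
    rw [Nat.factorial_succ]
    push_cast at hrec hchoose ⊢
    refine mul_right_cancel₀ hk ?_
    linear_combination Fintype.card α * k.factorial * hrec +
      (Fintype.card α - (k + 1)) * ih - markedPermCount α 1 * hchoose

end CycleLengthProdSum

section FullCycle

theorem isConj_of_isCycleOn_univ {α : Type*} [Finite α] {σ ρ : Perm α}
    (hσ : σ.IsCycleOn Set.univ) (hρ : ρ.IsCycleOn Set.univ) : IsConj σ ρ := by
  classical
  cases nonempty_fintype α
  rcases subsingleton_or_nontrivial α with _ | _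
  · rw [Subsingleton.elim σ ρ]
  · have hcycle : ∀ {π : Perm α}, π.IsCycleOn Set.univ → π.IsCycle := fun h =>
      isCycle_iff_exists_isCycleOn.2 ⟨_, Set.nontrivial_univ, h, fun _ _ => Set.mem_univ _⟩
    have hsupport : ∀ {π : Perm α}, π.IsCycleOn Set.univ → π.support = univ := fun h =>
      eq_univ_of_forall fun _ =>
        mem_support.2 (h.apply_ne Set.nontrivial_univ (Set.mem_univ _))
    exact (hcycle hσ).isConj (hcycle hρ) (by rw [hsupport hσ, hsupport hρ])

variable {α : Type*} [Fintype α] [DecidableEq α] {σ : Perm α}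

theorem numCycles_eq_one_iff [Nonempty α] : numCycles σ = 1 ↔ σ.IsCycleOn Set.univ := by
  have hsame : σ.IsCycleOn Set.univ ↔ ∀ x y, σ.SameCycle x y := by
    simp [IsCycleOn, Set.bijOn_univ]
  rw [hsame]
  constructor
  · intro h x y
    exact part_cyclePartition_eq_iff.1 (card_le_one.1 h.le _
      (mem_parts_cyclePartition.2 ⟨x, rfl⟩) _ (mem_parts_cyclePartition.2 ⟨y, rfl⟩))
  · intro h
    refine (card_le_one.2 fun C hC D hD => ?_).antisymm (numCycles_pos σ)
    obtain ⟨x, rfl⟩ := mem_parts_cyclePartition.1 hC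
    obtain ⟨y, rfl⟩ := mem_parts_cyclePartition.1 hD
    exact part_cyclePartition_eq_iff.2 (h x y)

theorem cycleLengthProd_of_numCycles_eq_one (hσ : numCycles σ = 1) :
    cycleLengthProd σ = Fintype.card α := by
  obtain ⟨C, hC⟩ := card_eq_one.1 hσ
  have hcard := (cyclePartition σ).sum_card_parts
  rw [hC, sum_singleton] at hcard
  rw [cycleLengthProd, hC, prod_singleton, hcard, card_univ]

end FullCycle

section Tuples

variable {α : Type*} [Fintype α] [DecidableEq α] {k : ℕ} {σ c : Perm α} {τ : Fin k → Perm α}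

/-- The `k`-tuples of transpositions whose product, multiplied by `σ` on the right, has a single
cycle. -/
def joinTuples (k : ℕ) (σ : Perm α) : Finset (Fin k → Perm α) :=
  {τ | (∀ i, (τ i).IsSwap) ∧ numCycles ((List.ofFn τ).prod * σ) = 1}

/-- The `k`-tuples of transpositions whose product, divided out of `c` on the left, leaves a
permutation with `k + 1` cycles. For an `n`-cycle `c` these are the tuples of `Σ_n(k)`. -/
def cutTuples (k : ℕ) (c : Perm α) : Finset (Fin k → Perm α) :=
  {τ | (∀ i, (τ i).IsSwap) ∧ numCycles ((List.ofFn τ).prod⁻¹ * c) = k + 1}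

theorem mem_joinTuples : τ ∈ joinTuples k σ ↔
    (∀ i, (τ i).IsSwap) ∧ numCycles ((List.ofFn τ).prod * σ) = 1 := by
  simp [joinTuples]

theorem mem_cutTuples : τ ∈ cutTuples k c ↔
    (∀ i, (τ i).IsSwap) ∧ numCycles ((List.ofFn τ).prod⁻¹ * c) = k + 1 := by
  simp [cutTuples]

theorem numCycles_le_numCycles_ofFn_prod_mul_add (hτ : ∀ i, (τ i).IsSwap) (σ : Perm α) :
    numCycles σ ≤ numCycles ((List.ofFn τ).prod * σ) + k := by
  simpa using numCycles_le_numCycles_prod_mul_add_length (List.forall_mem_ofFn_iff.2 hτ) σ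

theorem joinTuples_eq_empty (hσ : k + 1 < numCycles σ) : joinTuples k σ = ∅ := by
  refine eq_empty_of_forall_notMem fun τ hτ => ?_
  rw [mem_joinTuples] at hτ
  have hle := numCycles_le_numCycles_ofFn_prod_mul_add hτ.1 σ
  omega

theorem card_joinTuples_succ (k : ℕ) (σ : Perm α) :
    #(joinTuples (k + 1) σ) = ∑ τ with IsSwap τ, #(joinTuples k (τ * σ)) := by
  rw [← card_sigma]
  refine card_nbij' (fun τ => ⟨τ (Fin.last k), Fin.init τ⟩)
    (fun s => Fin.snoc (α := fun _ => Perm α) s.2 s.1) ?_ ?_ ?_ ?_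
  · intro τ hτ
    simp only [mem_coe, mem_sigma, mem_filter_univ, mem_joinTuples, Fin.forall_fin_succ',
      List.ofFn_succ', List.concat_eq_append, List.prod_append, List.prod_singleton,
      mul_assoc] at hτ ⊢
    exact ⟨hτ.1.2, hτ.1.1, hτ.2⟩
  · rintro ⟨t, τ⟩ hτ
    simp only [mem_coe, mem_sigma, mem_filter_univ, mem_joinTuples, Fin.forall_fin_succ',
      List.ofFn_succ', List.concat_eq_append, List.prod_append, List.prod_singleton,
      mul_assoc, Fin.snoc_castSucc, Fin.snoc_last] at hτ ⊢
    exact ⟨⟨hτ.2.1, hτ.1⟩, hτ.2.2⟩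
  · intro τ _
    exact Fin.snoc_init_self τ
  · rintro ⟨t, τ⟩ _
    simp

theorem card_mul_card_joinTuples (hσ : numCycles σ = k + 1) :
    (Fintype.card α * #(joinTuples k σ) : ℚ) =
      k.factorial * Fintype.card α ^ k * cycleLengthProd σ := by
  induction k generalizing σ with
  | zero =>
    have hjoin : #(joinTuples 0 σ) = 1 :=
      card_eq_one.2 ⟨_, eq_singleton_iff_unique_mem.2
        ⟨mem_joinTuples.2 ⟨finZeroElim, by simpa using hσ⟩, fun _ _ => Subsingleton.elim _ ![]⟩⟩
    simp [hjoin, cycleLengthProd_of_numCycles_eq_one hσ]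
  | succ k ih =>
    have hstep : ∀ τ ∈ ({τ | IsSwap τ} : Finset (Perm α)),
        (Fintype.card α * #(joinTuples k (τ * σ)) : ℚ) =
          k.factorial * Fintype.card α ^ k *
            if numCycles (τ * σ) + 1 = numCycles σ then (cycleLengthProd (τ * σ) : ℚ) else 0 := by
      intro τ hτ
      split_ifs with hjoin
      · exact ih (by omega)
      · have hle := numCycles_le_numCycles_isSwap_mul_add_one (mem_filter.1 hτ).2 σ
        rw [joinTuples_eq_empty (by omega)]
        simp
    rw [card_joinTuples_succ, Nat.cast_sum, mul_sum, sum_congr rfl hstep, ← mul_sum,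
      sum_isSwap_cycleLengthProd_mul, hσ, Nat.factorial_succ]
    push_cast
    ring

theorem isSwap_conj_iff {α : Type*} [DecidableEq α] {g τ : Perm α} :
    (g * τ * g⁻¹).IsSwap ↔ τ.IsSwap := by
  have hconj : ∀ {g τ : Perm α}, τ.IsSwap → (g * τ * g⁻¹).IsSwap := by
    rintro g _ ⟨x, y, hne, rfl⟩
    exact ⟨g x, g y, g.injective.ne hne, (swap_apply_apply g x y).symm⟩
  exact ⟨fun h => by simpa [mul_assoc] using hconj (g := g⁻¹) h, hconj⟩

theorem card_cutTuples_conj (k : ℕ) (g c : Perm α) :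
    #(cutTuples k (g * c * g⁻¹)) = #(cutTuples k c) := by
  refine (card_equiv (Equiv.piCongrRight fun _ => (MulAut.conj g).toEquiv) fun τ => ?_).symm
  have hprod : (List.ofFn fun i => MulAut.conj g (τ i)).prod =
      MulAut.conj g (List.ofFn τ).prod := by
    rw [map_list_prod, List.map_ofFn, Function.comp_def]
  have hquot : (List.ofFn fun i => MulAut.conj g (τ i)).prod⁻¹ * (g * c * g⁻¹) =
      g * ((List.ofFn τ).prod⁻¹ * c) * g⁻¹ := by
    rw [hprod, MulAut.conj_apply]
    group
  simp only [mem_cutTuples]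
  change _ ↔ (∀ i, (MulAut.conj g (τ i)).IsSwap) ∧
    numCycles ((List.ofFn fun i => MulAut.conj g (τ i)).prod⁻¹ * (g * c * g⁻¹)) = k + 1
  rw [hquot, numCycles_conj]
  simp only [MulAut.conj_apply, isSwap_conj_iff]

theorem sum_card_cutTuples (α : Type*) [Fintype α] [DecidableEq α] (k : ℕ) :
    ∑ c : Perm α with numCycles c = 1, #(cutTuples k c) =
      ∑ σ : Perm α with numCycles σ = k + 1, #(joinTuples k σ) := by
  rw [← card_sigma, ← card_sigma]
  refine card_nbij' (fun s => ⟨(List.ofFn s.2).prod⁻¹ * s.1, s.2⟩)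
    (fun s => ⟨(List.ofFn s.2).prod * s.1, s.2⟩) ?_ ?_ ?_ ?_
  · rintro ⟨c, τ⟩ h
    simp_all [mem_cutTuples, mem_joinTuples]
  · rintro ⟨σ, τ⟩ h
    simp_all [mem_cutTuples, mem_joinTuples]
  · rintro ⟨c, τ⟩ _
    simp
  · rintro ⟨σ, τ⟩ _
    simp

theorem card_filter_mul_card_cutTuples [Nonempty α] (k : ℕ) (hc : c.IsCycleOn Set.univ) :
    #{c : Perm α | numCycles c = 1} * #(cutTuples k c) =
      ∑ σ : Perm α with numCycles σ = k + 1, #(joinTuples k σ) := by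
  rw [← sum_card_cutTuples, ← smul_eq_mul, ← sum_const]
  refine sum_congr rfl fun c' hc' => ?_
  obtain ⟨g, rfl⟩ := isConj_iff.1
    (isConj_of_isCycleOn_univ hc (numCycles_eq_one_iff.1 (mem_filter.1 hc').2))
  rw [card_cutTuples_conj]

theorem card_mul_card_cutTuples [Nonempty α] (k : ℕ) (hc : c.IsCycleOn Set.univ) :
    Fintype.card α * #(cutTuples k c) =
      Fintype.card α ^ k * (Fintype.card α).choose (k + 1) := by
  have hcut := card_filter_mul_card_cutTuples k hc
  have hjoin : (Fintype.card α * ∑ σ : Perm α with numCycles σ = k + 1, #(joinTuples k σ) : ℚ) =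
      k.factorial * Fintype.card α ^ k * markedPermCount α (k + 1) := by
    rw [markedPermCount, Nat.cast_sum, Nat.cast_sum, mul_sum, mul_sum]
    exact sum_congr rfl fun σ hσ => card_mul_card_joinTuples (mem_filter.1 hσ).2
  have hmarked := card_mul_factorial_mul_markedPermCount α k
  have hone : (markedPermCount α 1 : ℚ) = #{c : Perm α | numCycles c = 1} * Fintype.card α := by
    rw [markedPermCount, Nat.cast_sum, ← nsmul_eq_mul, ← sum_const]
    exact sum_congr rfl fun σ hσ =>
      congrArg _ (cycleLengthProd_of_numCycles_eq_one (mem_filter.1 hσ).2)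
  have hfull : (#{c : Perm α | numCycles c = 1} : ℚ) ≠ 0 :=
    Nat.cast_ne_zero.2 (card_pos.2 ⟨c, by simpa using numCycles_eq_one_iff.2 hc⟩).ne'
  have hcard : (Fintype.card α : ℚ) ≠ 0 := Nat.cast_ne_zero.2 Fintype.card_ne_zero
  rw [← hcut, Nat.cast_mul] at hjoin
  rw [← Nat.cast_inj (R := ℚ)]
  push_cast
  refine mul_left_cancel₀ (mul_ne_zero hcard hfull) ?_
  linear_combination Fintype.card α * hjoin + Fintype.card α ^ k * hmarked +
    Fintype.card α ^ k * (Fintype.card α).choose (k + 1) * hone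

end Tuples

section FreeAction

theorem exists_map_fibers_eq_orbits {G X Y : Type*} [Group G] [Finite G] [MulAction G X]
    (hfree : ∀ x : X, MulAction.stabilizer G x = ⊥) [Finite X] {S : Finset Y}
    (hcard : Nat.card X = Nat.card G * #S) :
    ∃ F : X → Y, Set.range F = S ∧ (∀ x y, F x = F y ↔ ∃ g : G, y = g • x) ∧
      ∀ s ∈ S, {x | F x = s}.ncard = Nat.card G := by
  have horbits : Nat.card X = Nat.card G * Nat.card (MulAction.orbitRel.Quotient G X) := by
    rw [Nat.card_congr (MulAction.selfEquivOrbitsQuotientProd hfree), Nat.card_prod, mul_comm]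
  have hS : Nat.card (MulAction.orbitRel.Quotient G X) = Nat.card S := by
    rw [Nat.card_eq_finsetCard]
    exact Nat.eq_of_mul_eq_mul_left Nat.card_pos (horbits.symm.trans hcard)
  let e : MulAction.orbitRel.Quotient G X ≃ S := (Finite.card_eq.1 hS).some
  have horbit : ∀ x y, (e (Quotient.mk'' x) : Y) = e (Quotient.mk'' y) ↔ ∃ g : G, y = g • x := by
    intro x y
    rw [Subtype.coe_inj, e.apply_eq_iff_eq, eq_comm, Quotient.eq'']
    simp only [MulAction.orbitRel_apply, MulAction.mem_orbit_iff, eq_comm]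
  refine ⟨fun x => e (Quotient.mk'' x), ?_, horbit, fun s hs => ?_⟩
  · have hsurj := e.surjective.comp (Quotient.mk''_surjective (s₁ := MulAction.orbitRel G X))
    change Set.range (Subtype.val ∘ e ∘ Quotient.mk'') = S
    rw [Set.range_comp, hsurj.range_eq, Set.image_univ, Subtype.range_coe]
  · obtain ⟨x, hx⟩ := Quotient.mk''_surjective (e.symm ⟨s, hs⟩)
    have hfiber : {y | (e (Quotient.mk'' y) : Y) = s} = MulAction.orbit G x := by
      ext y
      have hs : s = e (Quotient.mk'' x) := by rw [hx, e.apply_symm_apply]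
      change (e (Quotient.mk'' y) : Y) = s ↔ _
      rw [hs, eq_comm, horbit]
      simp only [MulAction.mem_orbit_iff, eq_comm]
    rw [hfiber, ← MulAction.index_stabilizer, hfree, Subgroup.index_bot]

end FreeAction

section Shift

open scoped Pointwise

variable {α : Type*} {c : Perm α}

theorem eq_one_of_mem_zpowers_of_apply_eq (hc : c.IsCycleOn Set.univ) {g : Perm α}
    (hg : g ∈ Subgroup.zpowers c) {x : α} (hx : g x = x) : g = 1 := by
  obtain ⟨j, rfl⟩ := hg
  ext y
  obtain ⟨i, rfl⟩ := hc.2 (Set.mem_univ x) (Set.mem_univ y)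
  change (c ^ j) ((c ^ i) x) = (c ^ i) x
  rw [← mul_apply, ← zpow_add, add_comm, zpow_add, mul_apply]
  exact congrArg _ hx

theorem stabilizer_zpowers_eq_bot [DecidableEq α] (hc : c.IsCycleOn Set.univ) {k : ℕ}
    (p : (Fin k → α) × Set.powersetCard α (k + 1)) :
    MulAction.stabilizer (Subgroup.zpowers c) p = ⊥ := by
  refine (Subgroup.eq_bot_iff_forall _).2 fun g hg => Subtype.ext ?_
  obtain ⟨A, B⟩ := p
  obtain ⟨hA, hB⟩ := Prod.ext_iff.1 (MulAction.mem_stabilizer_iff.1 hg)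
  cases k with
  | zero =>
    obtain ⟨b, hb⟩ := card_eq_one.1 B.2
    have hgb : ((g : Perm α) • {b} : Finset α) = {b} := hb ▸ congrArg Subtype.val hB
    exact eq_one_of_mem_zpowers_of_apply_eq hc g.2 (by simpa using hgb)
  | succ k => exact eq_one_of_mem_zpowers_of_apply_eq hc g.2 (congrFun hA 0)

variable [Fintype α] [Nonempty α]

theorem orderOf_of_isCycleOn_univ (hc : c.IsCycleOn Set.univ) :
    orderOf c = Fintype.card α := by
  rw [← coe_univ] at hc
  refine Nat.dvd_antisymm (orderOf_dvd_of_pow_eq_one ?_) ?_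
  · ext x
    exact hc.pow_card_apply (mem_univ x)
  · rw [← card_univ, ← hc.pow_apply_eq (mem_univ (Classical.arbitrary α)), pow_orderOf_eq_one,
      one_apply]

theorem stmt1_general [DecidableEq α] (hc : c.IsCycleOn Set.univ) (k : ℕ) :
    ∃ F : ((Fin k → α) × {B : Finset α // B.card = k + 1}) → (Fin k → Perm α),
      (∀ p, F p ∈ cutTuples k c) ∧
      (∀ γ ∈ cutTuples k c, ∃ p, F p = γ) ∧
      (∀ p q, F p = F q ↔
        ∃ r : ℤ, (∀ l, q.1 l = (c ^ r) (p.1 l)) ∧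
          (q.2 : Finset α) = (p.2 : Finset α).image (c ^ r)) ∧
      (∀ γ ∈ cutTuples k c, {p | F p = γ}.ncard = Fintype.card α) := by
  have hzpowers : Nat.card (Subgroup.zpowers c) = Fintype.card α := by
    rw [Nat.card_zpowers, orderOf_of_isCycleOn_univ hc]
  have hcard : Nat.card ((Fin k → α) × Set.powersetCard α (k + 1)) =
      Nat.card (Subgroup.zpowers c) * #(cutTuples k c) := by
    rw [hzpowers, card_mul_card_cutTuples k hc, Nat.card_prod, Set.powersetCard.card]
    simp
  obtain ⟨F, hrange, horbit, hfiber⟩ :=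
    exists_map_fibers_eq_orbits (stabilizer_zpowers_eq_bot hc) hcard
  refine ⟨F, fun p => ?_, fun γ hγ => ?_, fun p q => (horbit p q).trans ?_, hzpowers ▸ hfiber⟩
  · exact mem_coe.1 (hrange ▸ Set.mem_range_self p)
  · exact Set.mem_range.1 (hrange.symm ▸ mem_coe.2 hγ)
  · rw [Subgroup.exists_zpowers]
    exact exists_congr fun r => Prod.ext_iff.trans (and_congr funext_iff Subtype.ext_iff)

end Shift

section FinRotate

theorem isCycleOn_finRotate (n : ℕ) : (finRotate n).IsCycleOn Set.univ := by
  rcases lt_or_ge n 2 with hn | hn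
  · have : Subsingleton (Fin n) := Fin.subsingleton_iff_le_one.2 (by omega)
    exact isCycleOn_of_subsingleton _ _
  · have hmoved : {x | finRotate n x ≠ x} = Set.univ := by
      rw [← coe_univ, ← support_finRotate_of_le hn]
      ext x
      simp
    exact hmoved ▸ (isCycle_finRotate_of_le hn).isCycleOn

theorem cycleCount_eq_numCycles {n : ℕ} (σ : Perm (Fin n)) : cycleCount σ = numCycles σ := by
  rw [cycleCount, numCycles, ← Set.ncard_coe_finset]
  refine Set.ncard_congr (fun x _ => (cyclePartition σ).part x)
    (fun x _ => mem_parts_cyclePartition.2 ⟨x, rfl⟩) (fun x y hx hy hxy => ?_) fun C hC => ?_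
  · rw [part_cyclePartition_eq_iff] at hxy
    exact le_antisymm (hx y hxy) (hy x hxy.symm)
  · have hne := (cyclePartition σ).nonempty_of_mem_parts hC
    have hmin := (cyclePartition σ).part_eq_of_mem hC (C.min'_mem hne)
    exact ⟨C.min' hne, fun y hy => C.min'_le y (hmin ▸ mem_part_cyclePartition.2 hy), hmin⟩

theorem mem_SigmaSet_iff_mem_cutTuples {n k : ℕ} [NeZero n] {τ : Fin k → Perm (Fin n)} :
    τ ∈ SigmaSet n k ↔ τ ∈ cutTuples k (finRotate n) := by
  have hfull : numCycles (finRotate n) = 1 := numCycles_eq_one_iff.2 (isCycleOn_finRotate n)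
  have hquot := numCycles_le_card ((List.ofFn τ).prod⁻¹ * finRotate n)
  rw [Fintype.card_fin] at hquot
  have hn := NeZero.pos n
  have hsub := numCycles_add_numCycles_le ((List.ofFn τ).prod⁻¹ * finRotate n) (List.ofFn τ).prod
  rw [mul_inv_cancel_left, hfull, Fintype.card_fin] at hsub
  rw [mem_cutTuples, SigmaSet]
  change _ ∧ _ ↔ _
  refine and_congr_right fun hτ => ?_
  have hlip := numCycles_le_numCycles_ofFn_prod_mul_add hτ 1
  rw [mul_one, numCycles_one, Fintype.card_fin] at hlip
  simp only [precLe, normPerm, cycleCount_eq_numCycles, hfull]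
  omega

end FinRotate

/-- There is a surjection F from {1,…,n}^k × (subsets of {1,…,n} of size k+1) onto Σ_n(k)
whose fibres are exactly the orbits of the shift modulo n; in particular every fibre has
exactly n elements. -/
theorem stmt1 (n k : ℕ) (hn : 1 ≤ n) (hk : k ≤ n - 1) :
    ∃ F : ((Fin k → Fin n) × {B : Finset (Fin n) // B.card = k + 1}) →
        (Fin k → Equiv.Perm (Fin n)),
      (∀ p, F p ∈ SigmaSet n k) ∧
      (∀ γ ∈ SigmaSet n k, ∃ p, F p = γ) ∧
      (∀ p q, F p = F q ↔
        ∃ r : ℤ, (∀ l, q.1 l = ((finRotate n) ^ r) (p.1 l)) ∧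
          (q.2 : Finset (Fin n)) = (p.2 : Finset (Fin n)).image ((finRotate n) ^ r)) ∧
      (∀ γ ∈ SigmaSet n k, {p | F p = γ}.ncard = n) := by
  have : NeZero n := ⟨by omega⟩
  simpa only [mem_SigmaSet_iff_mem_cutTuples, Fintype.card_fin] using
    stmt1_general (isCycleOn_finRotate n) k
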